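/- arXiv:1902.04894 — 9 statements merged into one kernel-verified Lean document; each statement's English description precedes it below -/
import Mathlib

section
/- Let f : [0,∞) → ℝ be a superquadratic function, let μ be a probability measure on a measurable space S, and let φ : S → [0,∞) be a nonnegative μ-integrable function. Then f(∫ φ dμ) ≤ ∫ [ f(φ(s)) − f(|φ(s) − ∫ φ dμ|) ] dμ(s). -/
open MeasureTheory

/-- A function `f : [0,∞) → ℝ` is superquadratic if for every `x ≥ 0` there exists a
constant `C_x ∈ ℝ` such that `f(t) ≥ f(x) + C_x (t − x) + f(|t − x|)` for all `t ≥ 0`. -/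
def Superquadratic (f : ℝ → ℝ) : Prop :=
  ∀ x : ℝ, 0 ≤ x → ∃ C : ℝ, ∀ t : ℝ, 0 ≤ t → f x + C * (t - x) + f |t - x| ≤ f t

/-- If `f` is superquadratic, `μ` is a probability measure and `φ` is a
nonnegative `μ`-integrable function, then
`f(∫ φ dμ) ≤ ∫ [ f(φ(s)) − f(|φ(s) − ∫ φ dμ|) ] dμ(s)`. -/
theorem superquadratic_jensen {S : Type*} [MeasurableSpace S] (μ : Measure S)
    [IsProbabilityMeasure μ] (f : ℝ → ℝ) (hf : Superquadratic f)
    (φ : S → ℝ) (hφ : ∀ s, 0 ≤ φ s) (hφint : Integrable φ μ)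
    (hfφ : Integrable (fun s => f (φ s)) μ)
    (hfabs : Integrable (fun s => f |φ s - ∫ s', φ s' ∂μ|) μ) :
    f (∫ s, φ s ∂μ) ≤ ∫ s, (f (φ s) - f |φ s - ∫ s', φ s' ∂μ|) ∂μ := by
  have hm : 0 ≤ ∫ s, φ s ∂μ := integral_nonneg hφ
  obtain ⟨C, hC⟩ := hf _ hm
  have hlin : Integrable (fun s => C * (φ s - ∫ s', φ s' ∂μ)) μ :=
    (hφint.sub (integrable_const _)).const_mul C
  have h0 : ∫ s, (f (∫ s', φ s' ∂μ) + C * (φ s - ∫ s', φ s' ∂μ)) ∂μ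
      = f (∫ s, φ s ∂μ) := by
    rw [integral_add (integrable_const _) hlin, integral_const_mul,
      integral_sub hφint (integrable_const _)]
    simp
  rw [← h0]
  refine integral_mono ((integrable_const _).add hlin) (hfφ.sub hfabs) ?_
  intro s
  have h := hC (φ s) (hφ s)
  simp only [Pi.add_apply, Pi.sub_apply]
  linarith
end

section
/- Let f : [0,∞) → ℝ be a superquadratic function that is differentiable (from the right at 0 and at every x > 0) and satisfies f(0) = 0 and f′(0) = 0. Then for every x ≥ 0 the constant C_x in the definition can be taken equal to f′(x); that is, f(t) ≥ f(x) + f′(x)(t − x) + f(|t − x|) for all t ≥ 0 and all x ≥ 0. -/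
/-- If `f` is superquadratic, differentiable on `[0,∞)` (from the right
at `0`), with `f(0) = 0` and `f′(0) = 0`, then the constant `C_x` can be taken to be
`f′(x)`: `f(t) ≥ f(x) + f′(x)(t − x) + f(|t − x|)` for all `t ≥ 0` and `x ≥ 0`. -/
theorem superquadratic_deriv_is_constant (f : ℝ → ℝ) (hf : Superquadratic f)
    (hdiff : ∀ x : ℝ, 0 ≤ x → DifferentiableWithinAt ℝ f (Set.Ici 0) x)
    (hf0 : f 0 = 0) (hf'0 : derivWithin f (Set.Ici 0) 0 = 0) :
    ∀ x : ℝ, 0 ≤ x → ∀ t : ℝ, 0 ≤ t →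
      f x + derivWithin f (Set.Ici 0) x * (t - x) + f |t - x| ≤ f t := by
  intro x hx t ht
  rcases hx.eq_or_lt with rfl | hx0
  · rw [hf'0, hf0]
    simp [abs_of_nonneg ht]
  obtain ⟨C, hC⟩ := hf x hx
  have hd0 : HasDerivWithinAt f 0 (Set.Ici 0) 0 := by
    have h := (hdiff 0 le_rfl).hasDerivWithinAt
    rwa [hf'0] at h
  have habs : HasDerivAt (fun s : ℝ => f |s - x|) 0 x := by
    rw [hasDerivAt_iff_isLittleO]
    rw [hasDerivWithinAt_iff_isLittleO] at hd0
    have htend : Filter.Tendsto (fun s : ℝ => |s - x|) (nhds x) (nhdsWithin 0 (Set.Ici 0)) := by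
      apply tendsto_nhdsWithin_of_tendsto_nhds_of_eventually_within
      · have hc : Continuous (fun s : ℝ => |s - x|) := by fun_prop
        simpa using hc.tendsto x
      · exact Filter.Eventually.of_forall fun s => Set.mem_Ici.mpr (abs_nonneg (s - x))
    have h := hd0.comp_tendsto htend
    simp only [Function.comp_def, sub_zero, smul_zero] at h
    simpa using h.trans_isBigO (Asymptotics.isBigO_refl (fun s : ℝ => s - x) _).abs_left
  have hnhds : Set.Ici (0 : ℝ) ∈ nhds x := Ici_mem_nhds hx0
  have hdx : HasDerivAt f (derivWithin f (Set.Ici 0) x) x :=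
    (hdiff x hx).hasDerivWithinAt.hasDerivAt hnhds
  have hlin : HasDerivAt (fun s : ℝ => C * (s - x)) C x := by
    simpa using ((hasDerivAt_id x).sub_const x).const_mul C
  have hg := (hdx.sub hlin).sub habs
  have hmin : IsLocalMin (f - (fun s : ℝ => C * (s - x)) - (fun s : ℝ => f |s - x|)) x := by
    filter_upwards [hnhds] with s hs
    have h := hC s hs
    simp only [Pi.sub_apply, sub_self, abs_zero, hf0, mul_zero, sub_zero]
    linarith
  have hz := hmin.hasDerivAt_eq_zero hg
  have hCeq : derivWithin f (Set.Ici 0) x = C := by linarith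
  rw [hCeq]
  exact hC t ht
end

section
/- Let f : [0,∞) → ℝ be a superquadratic function with f(x) ≥ 0 for all x ≥ 0. Then f is convex on [0,∞), f(0) = 0, and the (right) derivative of f at 0 exists and equals 0. -/
/-- If `f` is superquadratic and nonnegative on `[0,∞)`, then `f` is
convex on `[0,∞)`, `f(0) = 0`, and the right derivative of `f` at `0` exists and is `0`. -/
theorem superquadratic_nonneg_convex (f : ℝ → ℝ) (hf : Superquadratic f)
    (hpos : ∀ x : ℝ, 0 ≤ x → 0 ≤ f x) :
    ConvexOn ℝ (Set.Ici 0) f ∧ f 0 = 0 ∧ HasDerivWithinAt f 0 (Set.Ici 0) 0 := by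
  have h0 : f 0 = 0 := by
    obtain ⟨C, hC⟩ := hf 0 le_rfl
    have h1 := hC 0 le_rfl
    have h2 := hpos 0 le_rfl
    simp at h1
    linarith
  have hsup : ∀ x : ℝ, 0 ≤ x → ∃ C : ℝ, ∀ t : ℝ, 0 ≤ t → f x + C * (t - x) ≤ f t := by
    intro x hx
    obtain ⟨C, hC⟩ := hf x hx
    refine ⟨C, fun t ht => ?_⟩
    have h1 := hC t ht
    have h2 := hpos |t - x| (abs_nonneg _)
    linarith
  have hconv : ConvexOn ℝ (Set.Ici 0) f := by
    refine ⟨convex_Ici 0, ?_⟩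
    intro x hx y hy a b ha hb hab
    simp only [Set.mem_Ici, smul_eq_mul] at *
    obtain ⟨C, hC⟩ := hsup (a * x + b * y) (by positivity)
    have h1 := mul_le_mul_of_nonneg_left (hC x hx) ha
    have h2 := mul_le_mul_of_nonneg_left (hC y hy) hb
    have h3 : b = 1 - a := by linarith
    subst h3
    linarith
  refine ⟨hconv, h0, ?_⟩
  have hhalf : ∀ x : ℝ, 0 ≤ x → 4 * f x ≤ f (2 * x) := by
    intro x hx
    obtain ⟨C, hC⟩ := hf x hx
    have h1 := hC 0 le_rfl
    have h2 := hC (2 * x) (by positivity)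
    rw [show |0 - x| = x by rw [zero_sub, abs_neg, abs_of_nonneg hx], h0] at h1
    rw [show 2 * x - x = x by ring, abs_of_nonneg hx] at h2
    linarith
  have hpow : ∀ n : ℕ, f ((1 / 2) ^ n) ≤ (1 / 2) ^ n * ((1 / 2) ^ n * f 1) := by
    intro n
    induction n with
    | zero => simp
    | succ k ih =>
      have h1 := hhalf ((1 / 2) ^ (k + 1)) (by positivity)
      rw [show (2 : ℝ) * (1 / 2) ^ (k + 1) = (1 / 2) ^ k by rw [pow_succ]; ring] at h1
      rw [show ((1 : ℝ) / 2) ^ (k + 1) * ((1 / 2) ^ (k + 1) * f 1)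
        = ((1 / 2) ^ k * ((1 / 2) ^ k * f 1)) / 4 by rw [pow_succ]; ring]
      linarith
  rw [hasDerivWithinAt_iff_isLittleO, Asymptotics.isLittleO_iff]
  intro c hc
  have hlim : Filter.Tendsto (fun n : ℕ => ((1 : ℝ) / 2) ^ n * f 1) Filter.atTop (nhds 0) := by
    have := (tendsto_pow_atTop_nhds_zero_of_lt_one (r := (1 : ℝ) / 2)
      (by norm_num) (by norm_num)).mul_const (f 1)
    simpa using this
  obtain ⟨n, hn⟩ := (hlim.eventually (gt_mem_nhds hc)).exists
  have hd : (0 : ℝ) < (1 / 2) ^ n := by positivity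
  have hp := hpow n
  generalize ((1 : ℝ) / 2) ^ n = d at hn hd hp
  filter_upwards [self_mem_nhdsWithin, mem_nhdsWithin_of_mem_nhds (gt_mem_nhds hd)] with x hx hxd
  have hx' : 0 ≤ x := hx
  have hxd' : x < d := hxd
  simp only [h0, sub_zero, smul_zero, Real.norm_eq_abs, abs_of_nonneg (hpos x hx'),
    abs_of_nonneg hx']
  have h5 : x / d ≤ 1 := (div_le_one hd).2 hxd'.le
  have h6 : 0 ≤ x / d := by positivity
  have h4 := hconv.2 (Set.mem_Ici.2 (le_refl (0 : ℝ))) (Set.mem_Ici.2 hd.le)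
    (sub_nonneg.2 h5) h6 (by ring)
  simp only [smul_eq_mul, h0, mul_zero, zero_add, div_mul_cancel₀ x hd.ne'] at h4
  calc f x ≤ x / d * f d := h4
    _ ≤ x / d * (d * (d * f 1)) := mul_le_mul_of_nonneg_left hp h6
    _ = (d * f 1) * x := by field_simp
    _ ≤ c * x := mul_le_mul_of_nonneg_right hn.le hx'
end

section
/- Let f : [0,∞) → ℝ be differentiable on [0,∞) with f(0) = 0 and f′(0) = 0. If the derivative f′ is convex on [0,∞), then f is superquadratic; if f′ is concave on [0,∞), then f is subquadratic (i.e., −f is superquadratic). -/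
theorem superadd_aux (g : ℝ → ℝ) (hg : ConvexOn ℝ (Set.Ici 0) g) (h0 : g 0 = 0)
    (a b : ℝ) (ha : 0 ≤ a) (hb : 0 ≤ b) : g a + g b ≤ g (a + b) := by
  rcases eq_or_lt_of_le (add_nonneg ha hb) with h | h
  · have h1 : a = 0 := by linarith
    have h2 : b = 0 := by linarith
    subst h1; subst h2; simp [h0]
  · have hab : a / (a + b) + b / (a + b) = 1 := by field_simp
    have e1 : a / (a + b) * (a + b) = a := by field_simp
    have e2 : b / (a + b) * (a + b) = b := by field_simp
    have p1 : 0 ≤ a / (a + b) := by positivity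
    have p2 : 0 ≤ b / (a + b) := by positivity
    have k1 := hg.2 (x := a + b) h.le (y := 0) (Set.mem_Ici.2 le_rfl) p1 p2 hab
    have k2 := hg.2 (x := a + b) h.le (y := 0) (Set.mem_Ici.2 le_rfl) p2 p1 (by linarith)
    simp only [smul_eq_mul, mul_zero, add_zero, h0, e1, e2] at k1 k2
    have : a / (a + b) * g (a + b) + b / (a + b) * g (a + b) = g (a + b) := by
      rw [← add_mul, hab, one_mul]
    linarith

theorem superquadratic_aux (f f' : ℝ → ℝ)
    (hdiff : ∀ x ∈ Set.Ici (0 : ℝ), HasDerivWithinAt f (f' x) (Set.Ici 0) x)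
    (hf0 : f 0 = 0) (hf'0 : f' 0 = 0) (hc : ConvexOn ℝ (Set.Ici 0) f') :
    Superquadratic f := by
  have hcont : ContinuousOn f (Set.Ici 0) := fun x hx => (hdiff x hx).continuousWithinAt
  have hd : ∀ x : ℝ, 0 < x → HasDerivAt f (f' x) x := fun x hx =>
    (hdiff x hx.le).hasDerivAt (Ici_mem_nhds hx)
  intro x hx
  refine ⟨f' x, fun t ht => ?_⟩
  rcases le_total x t with h | h
  · rw [abs_of_nonneg (by linarith)]
    have hm : MonotoneOn (fun s => f s - f' x * (s - x) - f (s - x)) (Set.Ici x) := by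
      apply monotoneOn_of_hasDerivWithinAt_nonneg (convex_Ici x)
        (f' := fun s => f' s - f' x - f' (s - x))
      · refine ((hcont.mono (Set.Ici_subset_Ici.2 hx)).sub (by fun_prop)).sub
          (hcont.comp (by fun_prop) ?_)
        intro s hs
        simpa using hs
      · intro s hs
        rw [interior_Ici] at hs
        have hs' : x < s := hs
        have h1 := hd s (by linarith)
        have h2 : HasDerivAt (fun s => f (s - x)) (f' (s - x)) s :=
          (hd (s - x) (by linarith)).comp_sub_const s x
        have h3 : HasDerivAt (fun s => f' x * (s - x)) (f' x) s := by
          simpa using ((hasDerivAt_id s).sub_const x).const_mul (f' x)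
        exact ((h1.sub h3).sub h2).hasDerivWithinAt
      · intro s hs
        rw [interior_Ici] at hs
        have hs' : x < s := hs
        have := superadd_aux f' hc hf'0 x (s - x) hx (by linarith)
        rw [add_sub_cancel] at this
        show 0 ≤ f' s - f' x - f' (s - x)
        linarith
    have := hm (Set.mem_Ici.2 le_rfl) (Set.mem_Ici.2 h) h
    simp only [sub_self, hf0, mul_zero] at this
    linarith
  · rw [abs_of_nonpos (by linarith), neg_sub]
    have hm : AntitoneOn (fun s => f s - f' x * (s - x) - f (x - s)) (Set.Icc 0 x) := by
      apply antitoneOn_of_hasDerivWithinAt_nonpos (convex_Icc 0 x)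
        (f' := fun s => f' s - f' x - -f' (x - s))
      · refine ((hcont.mono Set.Icc_subset_Ici_self).sub (by fun_prop)).sub
          (hcont.comp (by fun_prop) ?_)
        intro s hs
        simpa using hs.2
      · intro s hs
        rw [interior_Icc] at hs
        have h1 := hd s hs.1
        have h2 : HasDerivAt (fun s => f (x - s)) (-f' (x - s)) s :=
          (hd (x - s) (by linarith [hs.2])).comp_const_sub x s
        have h3 : HasDerivAt (fun s => f' x * (s - x)) (f' x) s := by
          simpa using ((hasDerivAt_id s).sub_const x).const_mul (f' x)
        exact ((h1.sub h3).sub h2).hasDerivWithinAt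
      · intro s hs
        rw [interior_Icc] at hs
        have := superadd_aux f' hc hf'0 s (x - s) hs.1.le (by linarith [hs.2])
        rw [add_sub_cancel] at this
        show f' s - f' x - -f' (x - s) ≤ 0
        linarith
    have := hm (Set.mem_Icc.2 ⟨ht, h⟩) (Set.mem_Icc.2 ⟨hx, le_rfl⟩) h
    simp only [sub_self, hf0, mul_zero] at this
    linarith

/-- Let `f` be differentiable on `[0,∞)` with derivative `f'`,
`f(0) = 0` and `f′(0) = 0`. If `f′` is convex on `[0,∞)` then `f` is superquadratic;
if `f′` is concave on `[0,∞)` then `f` is subquadratic (i.e. `−f` is superquadratic). -/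
theorem superquadratic_of_deriv_convex (f f' : ℝ → ℝ)
    (hdiff : ∀ x ∈ Set.Ici (0 : ℝ), HasDerivWithinAt f (f' x) (Set.Ici 0) x)
    (hf0 : f 0 = 0) (hf'0 : f' 0 = 0) :
    (ConvexOn ℝ (Set.Ici 0) f' → Superquadratic f) ∧
    (ConcaveOn ℝ (Set.Ici 0) f' → Superquadratic (-f)) := by
  refine ⟨superquadratic_aux f f' hdiff hf0 hf'0, fun hc => ?_⟩
  exact superquadratic_aux (-f) (-f') (fun x hx => (hdiff x hx).neg) (by simp [hf0])
    (by simp [hf'0]) hc.neg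
end

section
/- Let I = [0,M] ⊆ [0,∞) and let f : I → ℝ be a continuous operator superquadratic function on I with f(x) ≥ 0 for all x ∈ I. Then f is operator convex on I, i.e., f(αA + (1−α)B) ≤ α f(A) + (1−α) f(B) for all α ∈ [0,1] and all positive bounded linear operators A, B with spectra in I, and moreover f(0) = 0. -/
/-- The absolute value `|T| = (T*T)^{1/2}` of a bounded operator, via the continuous
functional calculus. -/
noncomputable def opAbs {H : Type*} [NormedAddCommGroup H] [InnerProductSpace ℂ H]
    [CompleteSpace H] (T : H →L[ℂ] H) : H →L[ℂ] H :=
  CFC.sqrt (star T * T)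

/-- A continuous function `f : [0,M] → ℝ` is operator superquadratic if
`f(αA + (1−α)B) ≤ α[f(A) − f((1−α)|A−B|)] + (1−α)[f(B) − f(α|A−B|)]`
for all `α ∈ [0,1]` and all positive bounded linear operators `A, B` on a complex
Hilbert space with spectra contained in `[0,M]`. -/
def OperatorSuperquadraticOn (M : ℝ) (f : ℝ → ℝ) : Prop :=
  ∀ (H : Type) [NormedAddCommGroup H] [InnerProductSpace ℂ H] [CompleteSpace H],
    ∀ A B : H →L[ℂ] H, 0 ≤ A → 0 ≤ B →
      spectrum ℝ A ⊆ Set.Icc 0 M → spectrum ℝ B ⊆ Set.Icc 0 M →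
      ∀ α : ℝ, α ∈ Set.Icc (0 : ℝ) 1 →
        cfc f (α • A + (1 - α) • B) ≤
          α • (cfc f A - cfc f ((1 - α) • opAbs (A - B))) +
          (1 - α) • (cfc f B - cfc f (α • opAbs (A - B)))

/-- Spectrum of `c|A - B|` lies in `[0,M]`. -/
lemma spectrum_smul_opAbs_sub {M : ℝ} {H : Type} [NormedAddCommGroup H]
    [InnerProductSpace ℂ H] [CompleteSpace H] (A B : H →L[ℂ] H) (hA : 0 ≤ A) (hB : 0 ≤ B)
    (hsA : spectrum ℝ A ⊆ Set.Icc 0 M) (hsB : spectrum ℝ B ⊆ Set.Icc 0 M)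
    (c : ℝ) (hc : c ∈ Set.Icc (0 : ℝ) 1) :
    spectrum ℝ (c • opAbs (A - B)) ⊆ Set.Icc 0 M := by
  have sA : IsSelfAdjoint A := .of_nonneg hA
  have sB : IsSelfAdjoint B := .of_nonneg hB
  have sAB : IsSelfAdjoint (A - B) := sA.sub sB
  have hA' : A ≤ algebraMap ℝ _ M :=
    (le_algebraMap_iff_spectrum_le (a := A)).2 fun x hx => (hsA hx).2
  have hB' : B ≤ algebraMap ℝ _ M :=
    (le_algebraMap_iff_spectrum_le (a := B)).2 fun x hx => (hsB hx).2
  have h1 : A - B ≤ algebraMap ℝ _ M := (sub_le_self A hB).trans hA'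
  have h2 : algebraMap ℝ _ (-M) ≤ A - B := by
    rw [map_neg, neg_le, neg_sub]
    exact (sub_le_self B hA).trans hB'
  have e : c • opAbs (A - B) = cfc (fun x : ℝ => c * |x|) (A - B) := by
    rw [cfc_const_mul c (fun x : ℝ => |x|) (A - B)]
    congr 1
    exact CFC.abs_eq_cfc_norm (A - B) sAB
  rw [e, cfc_map_spectrum (fun x : ℝ => c * |x|) (A - B)]
  rintro _ ⟨x, hx, rfl⟩
  have hx1 := (le_algebraMap_iff_spectrum_le (a := A - B)).1 h1 x hx
  have hx2 := (algebraMap_le_iff_le_spectrum (a := A - B)).1 h2 x hx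
  have : |x| ≤ M := abs_le.2 ⟨hx2, hx1⟩
  exact ⟨mul_nonneg hc.1 (abs_nonneg x),
    (mul_le_of_le_one_left (abs_nonneg x) hc.2).trans this⟩

/-- If `f` is continuous, operator superquadratic and nonnegative on
`I = [0,M]`, then `f` is operator convex on `I` and `f(0) = 0`. -/
theorem operatorSuperquadratic_nonneg_operatorConvex {M : ℝ} (hM : 0 ≤ M) (f : ℝ → ℝ)
    (hcont : ContinuousOn f (Set.Icc 0 M)) (hf : OperatorSuperquadraticOn M f)
    (hpos : ∀ x ∈ Set.Icc (0 : ℝ) M, 0 ≤ f x) :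
    (∀ (H : Type) [NormedAddCommGroup H] [InnerProductSpace ℂ H] [CompleteSpace H],
      ∀ A B : H →L[ℂ] H, 0 ≤ A → 0 ≤ B →
        spectrum ℝ A ⊆ Set.Icc 0 M → spectrum ℝ B ⊆ Set.Icc 0 M →
        ∀ α : ℝ, α ∈ Set.Icc (0 : ℝ) 1 →
          cfc f (α • A + (1 - α) • B) ≤ α • cfc f A + (1 - α) • cfc f B) ∧
    f 0 = 0 := by
  refine ⟨?_, le_antisymm ?_ (hpos 0 ⟨le_rfl, hM⟩)⟩
  · intro H _ _ _ A B hA hB hsA hsB α hα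
    have hα' : 1 - α ∈ Set.Icc (0 : ℝ) 1 := ⟨by linarith [hα.2], by linarith [hα.1]⟩
    refine (hf H A B hA hB hsA hsB α hα).trans ?_
    have p1 : 0 ≤ cfc f ((1 - α) • opAbs (A - B)) := cfc_nonneg fun x hx =>
      hpos x (spectrum_smul_opAbs_sub A B hA hB hsA hsB _ hα' hx)
    have p2 : 0 ≤ cfc f (α • opAbs (A - B)) := cfc_nonneg fun x hx =>
      hpos x (spectrum_smul_opAbs_sub A B hA hB hsA hsB _ hα hx)
    exact add_le_add (smul_le_smul_of_nonneg_left (sub_le_self _ p1) hα.1)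
      (smul_le_smul_of_nonneg_left (sub_le_self _ p2) hα'.1)
  · have hs : spectrum ℝ (0 : ℂ →L[ℂ] ℂ) ⊆ Set.Icc 0 M := by
      rw [spectrum.zero_eq]
      rintro x rfl
      exact ⟨le_rfl, hM⟩
    have h := hf ℂ 0 0 le_rfl le_rfl hs hs (1 / 2) ⟨by norm_num, by norm_num⟩
    have h0 : opAbs (0 : ℂ →L[ℂ] ℂ) = 0 := by simp [opAbs]
    simp only [sub_zero, h0, smul_zero, add_zero, sub_self, cfc_apply_zero] at h
    have h3 := (algebraMap_le_iff_le_spectrum (a := (0 : ℂ →L[ℂ] ℂ))).1 h 0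
    simpa [spectrum.zero_eq] using h3
end

section
/- Let f : [0,∞) → ℝ be a continuous function that is operator convex and satisfies f(x) ≤ 0 for all x ≥ 0. Then f is operator superquadratic, in the sense that for all positive bounded linear operators A, B on a complex Hilbert space, f((A+B)/2) + f(|A−B|/2) ≤ (f(A) + f(B))/2. -/
/-- If `f : [0,∞) → ℝ` is continuous, operator convex and
nonpositive, then `f` is operator superquadratic in the midpoint sense:
`f((A+B)/2) + f(|A−B|/2) ≤ (f(A) + f(B))/2` for all positive operators `A, B`. -/
theorem operatorConvex_nonpos_operatorSuperquadratic (f : ℝ → ℝ)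
    (hcont : ContinuousOn f (Set.Ici 0))
    (hconv : ∀ (H : Type) [NormedAddCommGroup H] [InnerProductSpace ℂ H]
      [CompleteSpace H], ∀ A B : H →L[ℂ] H, 0 ≤ A → 0 ≤ B →
        ∀ α : ℝ, α ∈ Set.Icc (0 : ℝ) 1 →
          cfc f (α • A + (1 - α) • B) ≤ α • cfc f A + (1 - α) • cfc f B)
    (hneg : ∀ x : ℝ, 0 ≤ x → f x ≤ 0) :
    ∀ (H : Type) [NormedAddCommGroup H] [InnerProductSpace ℂ H] [CompleteSpace H],
      ∀ A B : H →L[ℂ] H, 0 ≤ A → 0 ≤ B →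
        cfc f ((2 : ℝ)⁻¹ • (A + B)) + cfc f ((2 : ℝ)⁻¹ • opAbs (A - B)) ≤
          (2 : ℝ)⁻¹ • (cfc f A + cfc f B) := by
  intro H _ _ _ A B hA hB
  have h1 := hconv H A B hA hB (2 : ℝ)⁻¹ ⟨by norm_num, by norm_num⟩
  have e : (1 - (2 : ℝ)⁻¹) = (2 : ℝ)⁻¹ := by norm_num
  rw [e, ← smul_add, ← smul_add] at h1
  have hpos : 0 ≤ (2 : ℝ)⁻¹ • opAbs (A - B) :=
    smul_nonneg (by norm_num) (CFC.sqrt_nonneg _)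
  have h2 : cfc f ((2 : ℝ)⁻¹ • opAbs (A - B)) ≤ 0 :=
    cfc_nonpos f _ fun x hx => hneg x (spectrum_nonneg_of_nonneg hpos hx)
  calc _ ≤ (2 : ℝ)⁻¹ • (cfc f A + cfc f B) + 0 := add_le_add h1 h2
    _ = _ := add_zero _
end

section
/- Let f : [0,∞) → ℝ be a continuous function that is operator concave and satisfies f(x) ≥ 0 for all x ≥ 0. Then f is operator subquadratic, in the sense that for all positive bounded linear operators A, B on a complex Hilbert space, (f(A) + f(B))/2 ≤ f((A+B)/2) + f(|A−B|/2). -/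
/-- If `f : [0,∞) → ℝ` is continuous, operator concave and
nonnegative, then `f` is operator subquadratic in the midpoint sense:
`(f(A) + f(B))/2 ≤ f((A+B)/2) + f(|A−B|/2)` for all positive operators `A, B`. -/
theorem operatorConcave_nonneg_operatorSubquadratic (f : ℝ → ℝ)
    (hcont : ContinuousOn f (Set.Ici 0))
    (hconc : ∀ (H : Type) [NormedAddCommGroup H] [InnerProductSpace ℂ H]
      [CompleteSpace H], ∀ A B : H →L[ℂ] H, 0 ≤ A → 0 ≤ B →
        ∀ α : ℝ, α ∈ Set.Icc (0 : ℝ) 1 →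
          α • cfc f A + (1 - α) • cfc f B ≤ cfc f (α • A + (1 - α) • B))
    (hpos : ∀ x : ℝ, 0 ≤ x → 0 ≤ f x) :
    ∀ (H : Type) [NormedAddCommGroup H] [InnerProductSpace ℂ H] [CompleteSpace H],
      ∀ A B : H →L[ℂ] H, 0 ≤ A → 0 ≤ B →
        (2 : ℝ)⁻¹ • (cfc f A + cfc f B) ≤
          cfc f ((2 : ℝ)⁻¹ • (A + B)) + cfc f ((2 : ℝ)⁻¹ • opAbs (A - B)) := by
  intro H _ _ _ A B hA hB
  have h1 := hconc H A B hA hB (2 : ℝ)⁻¹ ⟨by norm_num, by norm_num⟩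
  have e : (1 - (2 : ℝ)⁻¹) = (2 : ℝ)⁻¹ := by norm_num
  rw [e, ← smul_add, ← smul_add] at h1
  have hD : 0 ≤ (2 : ℝ)⁻¹ • opAbs (A - B) :=
    smul_nonneg (by norm_num) (CFC.sqrt_nonneg _)
  have h2 : 0 ≤ cfc f ((2 : ℝ)⁻¹ • opAbs (A - B)) :=
    cfc_nonneg fun x hx => hpos x (spectrum_nonneg_of_nonneg hD hx)
  exact h1.trans (le_add_of_nonneg_right h2)
end

section
/- Let r ∈ [0,1] and let A, B be positive bounded linear operators on a complex Hilbert space H. Then (A^r + B^r)/2 ≤ ((A+B)/2)^r + (|A−B|/2)^r, where powers are taken via the continuous functional calculus and |A−B| = ((A−B)*(A−B))^{1/2}. In particular, t ↦ t^r is operator subquadratic on [0,∞). -/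
/-- For `r ∈ [0,1]` and positive bounded operators `A, B` on a
complex Hilbert space, `(A^r + B^r)/2 ≤ ((A+B)/2)^r + (|A−B|/2)^r`; in particular
`t ↦ t^r` is operator subquadratic on `[0,∞)`. -/
theorem rpow_operatorSubquadratic (H : Type*) [NormedAddCommGroup H]
    [InnerProductSpace ℂ H] [CompleteSpace H] (r : ℝ) (hr : r ∈ Set.Icc (0 : ℝ) 1)
    (A B : H →L[ℂ] H) (hA : 0 ≤ A) (hB : 0 ≤ B) :
    (2 : ℝ)⁻¹ • (cfc (fun t : ℝ => t ^ r) A + cfc (fun t : ℝ => t ^ r) B) ≤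
      cfc (fun t : ℝ => t ^ r) ((2 : ℝ)⁻¹ • (A + B)) +
        cfc (fun t : ℝ => t ^ r) ((2 : ℝ)⁻¹ • opAbs (A - B)) := by
  have h2 : (0 : ℝ) ≤ 2⁻¹ := by norm_num
  have h1 : (2 : ℝ)⁻¹ + 2⁻¹ = 1 := by norm_num
  have hc := (CFC.concaveOn_rpow (A := H →L[ℂ] H) hr).2 (Set.mem_Ici.2 hA) (Set.mem_Ici.2 hB)
    h2 h2 h1
  have hAB : 0 ≤ (2 : ℝ)⁻¹ • (A + B) := smul_nonneg (by norm_num) (add_nonneg hA hB)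
  have hD : 0 ≤ (2 : ℝ)⁻¹ • opAbs (A - B) :=
    smul_nonneg (by norm_num) (CFC.sqrt_nonneg _)
  simp only [← smul_add] at hc
  rw [← CFC.rpow_eq_cfc_real hA, ← CFC.rpow_eq_cfc_real hB, ← CFC.rpow_eq_cfc_real hAB,
    ← CFC.rpow_eq_cfc_real hD]
  exact hc.trans (le_add_of_nonneg_right CFC.rpow_nonneg)
end

section
/- Let I = [0,M] ⊆ [0,∞) and let f : I → ℝ be continuous. Suppose that for every complex Hilbert space K, every pair of positive bounded linear operators A₁, A₂ on K with spectra contained in I, and every pair of orthogonal projections P₁, P₂ on K with P₁ + P₂ = 1_K, one has f(P₁A₁P₁ + P₂A₂P₂) ≤ P₁ f(A₁) P₁ + P₂ f(A₂) P₂ − P₁ f(|A₁ − (P₁A₁P₁ + P₂A₂P₂)|) P₁ − P₂ f(|A₂ − (P₁A₁P₁ + P₂A₂P₂)|) P₂. Then f is operator superquadratic on I. -/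
open ContinuousLinearMap in
/-- The block-diagonal star homomorphism attached to an orthogonal pair of isometries. -/
noncomputable def blockHom {H K : Type} [NormedAddCommGroup H] [InnerProductSpace ℂ H]
    [CompleteSpace H] [NormedAddCommGroup K] [InnerProductSpace ℂ K] [CompleteSpace K]
    (V W : H →L[ℂ] K)
    (h11 : ∀ x, adjoint V (V x) = x) (h12 : ∀ x, adjoint V (W x) = 0)
    (h21 : ∀ x, adjoint W (V x) = 0) (h22 : ∀ x, adjoint W (W x) = x)
    (hs : ∀ y, V (adjoint V y) + W (adjoint W y) = y) :
    ((H →L[ℂ] H) × (H →L[ℂ] H)) →⋆ₐ[ℂ] (K →L[ℂ] K) where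
  toFun a := V ∘L a.1 ∘L adjoint V + W ∘L a.2 ∘L adjoint W
  map_one' := by ext y; simp [hs]
  map_mul' a b := by ext y; simp [h11, h12, h21, h22]
  map_zero' := by ext y; simp
  map_add' a b := by ext y; simp; abel
  commutes' r := by
    ext y
    simp only [Algebra.algebraMap_eq_smul_one]
    simp [← smul_add, hs]
  map_star' a := by
    simp [star_eq_adjoint, adjoint_comp, ContinuousLinearMap.comp_assoc]

lemma spectrum_subset_of_le {H : Type} [NormedAddCommGroup H] [InnerProductSpace ℂ H]
    [CompleteSpace H] {M : ℝ} {A : H →L[ℂ] H} (h0 : 0 ≤ A) (h1 : A ≤ algebraMap ℝ _ M) :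
    spectrum ℝ A ⊆ Set.Icc 0 M := fun x hx =>
  ⟨spectrum_nonneg_of_nonneg h0 hx,
    (le_algebraMap_iff_spectrum_le (A := H →L[ℂ] H) (IsSelfAdjoint.of_nonneg h0)).1 h1 x hx⟩

lemma le_of_spectrum_subset {H : Type} [NormedAddCommGroup H] [InnerProductSpace ℂ H]
    [CompleteSpace H] {M : ℝ} {A : H →L[ℂ] H} (h0 : 0 ≤ A)
    (h1 : spectrum ℝ A ⊆ Set.Icc 0 M) : A ≤ algebraMap ℝ _ M :=
  (le_algebraMap_iff_spectrum_le (A := H →L[ℂ] H) (IsSelfAdjoint.of_nonneg h0)).2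
    fun x hx => (h1 hx).2

lemma spectrum_smul_abs {H : Type} [NormedAddCommGroup H] [InnerProductSpace ℂ H]
    [CompleteSpace H] {M : ℝ} {A B : H →L[ℂ] H} (hA : 0 ≤ A) (hB : 0 ≤ B)
    (hA1 : A ≤ algebraMap ℝ _ M) (hB1 : B ≤ algebraMap ℝ _ M) {t : ℝ} (ht : t ∈ Set.Icc (0:ℝ) 1) :
    spectrum ℝ (t • opAbs (A - B)) ⊆ Set.Icc 0 M := by
  have hsa : IsSelfAdjoint (A - B) := (IsSelfAdjoint.of_nonneg hA).sub (IsSelfAdjoint.of_nonneg hB)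
  have habs : 0 ≤ opAbs (A - B) := CFC.abs_nonneg _
  have hle : opAbs (A - B) ≤ algebraMap ℝ _ M := by
    refine (le_algebraMap_iff_spectrum_le (A := H →L[ℂ] H) (IsSelfAdjoint.of_nonneg habs)).2 ?_
    intro x hx
    have e := CFC.spectrum_abs (𝕜 := ℝ) (A - B) hsa
    change x ∈ spectrum ℝ (CFC.abs (A - B)) at hx
    rw [e] at hx
    obtain ⟨y, hy, rfl⟩ := hx
    have u : A - B ≤ algebraMap ℝ _ M := (sub_le_self A hB).trans hA1
    have l : algebraMap ℝ _ (-M) ≤ A - B := by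
      rw [map_neg]
      calc -(algebraMap ℝ (H →L[ℂ] H) M) ≤ -B := neg_le_neg hB1
        _ = 0 - B := by simp
        _ ≤ A - B := sub_le_sub_right hA B
    have u' := (le_algebraMap_iff_spectrum_le (A := H →L[ℂ] H) hsa).1 u y hy
    have l' := (algebraMap_le_iff_le_spectrum (A := H →L[ℂ] H) hsa).1 l y hy
    simpa using abs_le.2 ⟨l', u'⟩
  refine spectrum_subset_of_le (smul_nonneg ht.1 habs) (le_trans ?_ hle)
  calc t • opAbs (A - B) ≤ (1:ℝ) • opAbs (A - B) := smul_le_smul_of_nonneg_right ht.2 habs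
    _ = _ := one_smul _ _

lemma map_cfc_block {H K : Type} [NormedAddCommGroup H] [InnerProductSpace ℂ H]
    [CompleteSpace H] [NormedAddCommGroup K] [InnerProductSpace ℂ K] [CompleteSpace K]
    (φ : ((H →L[ℂ] H) × (H →L[ℂ] H)) →⋆ₐ[ℂ] (K →L[ℂ] K)) (f : ℝ → ℝ) {M : ℝ}
    (hcont : ContinuousOn f (Set.Icc 0 M)) {A B : H →L[ℂ] H} (hA : 0 ≤ A) (hB : 0 ≤ B)
    (hsA : spectrum ℝ A ⊆ Set.Icc 0 M) (hsB : spectrum ℝ B ⊆ Set.Icc 0 M) :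
    0 ≤ φ (A, B) ∧ spectrum ℝ (φ (A, B)) ⊆ Set.Icc 0 M ∧
      cfc f (φ (A, B)) = φ (cfc f A, cfc f B) := by
  have sA := IsSelfAdjoint.of_nonneg hA
  have sB := IsSelfAdjoint.of_nonneg hB
  have sAB : IsSelfAdjoint (A, B) := Prod.ext sA sB
  have hspec : spectrum ℝ (A, B) ⊆ Set.Icc 0 M := by
    rw [Prod.spectrum_eq]; exact Set.union_subset hsA hsB
  refine ⟨?_, ?_, ?_⟩
  · have e : φ (A, B) = star (φ (CFC.sqrt A, CFC.sqrt B)) * φ (CFC.sqrt A, CFC.sqrt B) := by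
      rw [← map_star, ← map_mul]
      congr 1
      ext1
      · change A = star (CFC.sqrt A) * CFC.sqrt A
        rw [(IsSelfAdjoint.of_nonneg (CFC.sqrt_nonneg A)).star_eq, CFC.sqrt_mul_sqrt_self A hA]
      · change B = star (CFC.sqrt B) * CFC.sqrt B
        rw [(IsSelfAdjoint.of_nonneg (CFC.sqrt_nonneg B)).star_eq, CFC.sqrt_mul_sqrt_self B hB]
    rw [e]
    exact star_mul_self_nonneg _
  · exact (AlgHom.spectrum_apply_subset (φ.restrictScalars ℝ) (A, B)).trans hspec
  · have : ContinuousFunctionalCalculus ℝ ((H →L[ℂ] H) × (H →L[ℂ] H)) IsSelfAdjoint :=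
      IsSelfAdjoint.instContinuousFunctionalCalculus
    rw [← cfc_map_prod (S := ℂ) f A B (hcont.mono (Set.union_subset hsA hsB)) sAB sA sB]
    symm
    exact StarAlgHomClass.map_cfc (S := ℂ) φ f (A, B) (hcont.mono hspec)
      (map_continuous φ) sAB (sAB.map φ)

lemma opAbs_block {H K : Type} [NormedAddCommGroup H] [InnerProductSpace ℂ H]
    [CompleteSpace H] [NormedAddCommGroup K] [InnerProductSpace ℂ K] [CompleteSpace K]
    (φ : ((H →L[ℂ] H) × (H →L[ℂ] H)) →⋆ₐ[ℂ] (K →L[ℂ] K)) (A B : H →L[ℂ] H) :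
    opAbs (φ (A, B)) = φ (opAbs A, opAbs B) := by
  have hA : 0 ≤ opAbs A := CFC.abs_nonneg _
  have hB : 0 ≤ opAbs B := CFC.abs_nonneg _
  have h0 : 0 ≤ φ (opAbs A, opAbs B) := by
    have e := (map_cfc_block φ id (M := max ‖opAbs A‖ ‖opAbs B‖) continuousOn_id hA hB
      (spectrum_subset_of_le hA ?_) (spectrum_subset_of_le hB ?_)).1
    · exact e
    · exact (IsSelfAdjoint.of_nonneg hA).le_algebraMap_norm_self.trans
        (algebraMap_mono _ (le_max_left _ _))
    · exact (IsSelfAdjoint.of_nonneg hB).le_algebraMap_norm_self.trans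
        (algebraMap_mono _ (le_max_right _ _))
  unfold opAbs at h0 ⊢
  refine CFC.sqrt_unique ?_ h0
  rw [← map_star, ← map_mul, ← map_mul]
  congr 1
  ext1
  · exact CFC.abs_mul_abs A
  · exact CFC.abs_mul_abs B

lemma opAbs_smul {H : Type} [NormedAddCommGroup H] [InnerProductSpace ℂ H]
    [CompleteSpace H] (t : ℝ) (A : H →L[ℂ] H) : opAbs (t • A) = |t| • opAbs A := by
  exact CFC.abs_smul t A

set_option maxHeartbeats 1600000 in
/-- If the two-projection Jensen inequality
`f(P₁A₁P₁ + P₂A₂P₂) ≤ P₁f(A₁)P₁ + P₂f(A₂)P₂ − P₁f(|A₁ − S|)P₁ − P₂f(|A₂ − S|)P₂`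
(where `S = P₁A₁P₁ + P₂A₂P₂`) holds on every complex Hilbert space for all positive
`A₁, A₂` with spectra in `[0,M]` and all projections `P₁, P₂` with `P₁ + P₂ = 1`,
then `f` is operator superquadratic on `[0,M]`. -/
theorem operatorSuperquadratic_of_projection_jensen {M : ℝ} (f : ℝ → ℝ)
    (hcont : ContinuousOn f (Set.Icc 0 M))
    (h : ∀ (K : Type) [NormedAddCommGroup K] [InnerProductSpace ℂ K] [CompleteSpace K],
      ∀ A₁ A₂ P₁ P₂ : K →L[ℂ] K, 0 ≤ A₁ → 0 ≤ A₂ →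
        spectrum ℝ A₁ ⊆ Set.Icc 0 M → spectrum ℝ A₂ ⊆ Set.Icc 0 M →
        IsSelfAdjoint P₁ → IsIdempotentElem P₁ →
        IsSelfAdjoint P₂ → IsIdempotentElem P₂ → P₁ + P₂ = 1 →
        cfc f (P₁ * A₁ * P₁ + P₂ * A₂ * P₂) ≤
          P₁ * cfc f A₁ * P₁ + P₂ * cfc f A₂ * P₂
            - P₁ * cfc f (opAbs (A₁ - (P₁ * A₁ * P₁ + P₂ * A₂ * P₂))) * P₁
            - P₂ * cfc f (opAbs (A₂ - (P₁ * A₁ * P₁ + P₂ * A₂ * P₂))) * P₂) :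
    OperatorSuperquadraticOn M f := by
  classical
  intro H _ _ _ A B hA hB hsA hsB α hα
  have hα' : 1 - α ∈ Set.Icc (0:ℝ) 1 := ⟨by linarith [hα.2], by linarith [hα.1]⟩
  have hA1 := le_of_spectrum_subset hA hsA
  have hB1 := le_of_spectrum_subset hB hsB
  set C := α • A + (1 - α) • B with hC
  have hC0 : 0 ≤ C := add_nonneg (smul_nonneg hα.1 hA) (smul_nonneg hα'.1 hB)
  have hC1 : C ≤ algebraMap ℝ _ M := by
    calc C ≤ α • algebraMap ℝ (H →L[ℂ] H) M + (1 - α) • algebraMap ℝ (H →L[ℂ] H) M :=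
          add_le_add (smul_le_smul_of_nonneg_left hA1 hα.1)
            (smul_le_smul_of_nonneg_left hB1 hα'.1)
      _ = _ := by rw [← add_smul]; simp
  have hsC := spectrum_subset_of_le hC0 hC1
  let V : H →L[ℂ] WithLp 2 (H × H) :=
    (WithLp.prodContinuousLinearEquiv 2 ℂ H H).symm.toContinuousLinearMap ∘L
      ContinuousLinearMap.inl ℂ H H
  let W : H →L[ℂ] WithLp 2 (H × H) :=
    (WithLp.prodContinuousLinearEquiv 2 ℂ H H).symm.toContinuousLinearMap ∘L
      ContinuousLinearMap.inr ℂ H H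
  have hVa : ContinuousLinearMap.adjoint V = WithLp.fstL 2 ℂ H H := by
    symm
    rw [ContinuousLinearMap.eq_adjoint_iff]
    intro x y
    simp [V, WithLp.prod_inner_apply]
  have hWa : ContinuousLinearMap.adjoint W = WithLp.sndL 2 ℂ H H := by
    symm
    rw [ContinuousLinearMap.eq_adjoint_iff]
    intro x y
    simp [W, WithLp.prod_inner_apply]
  have h11 : ∀ x, ContinuousLinearMap.adjoint V (V x) = x := by intro x; rw [hVa]; simp [V]
  have h12 : ∀ x, ContinuousLinearMap.adjoint V (W x) = 0 := by intro x; rw [hVa]; simp [W]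
  have h21 : ∀ x, ContinuousLinearMap.adjoint W (V x) = 0 := by intro x; rw [hWa]; simp [V]
  have h22 : ∀ x, ContinuousLinearMap.adjoint W (W x) = x := by intro x; rw [hWa]; simp [W]
  have hs : ∀ y, V (ContinuousLinearMap.adjoint V y) + W (ContinuousLinearMap.adjoint W y) = y := by
    intro y
    rw [hVa, hWa]
    apply (WithLp.prodContinuousLinearEquiv 2 ℂ H H).injective
    ext <;> simp [V, W]
  clear_value V W
  clear hVa hWa
  obtain ⟨c, s, hcc, hss⟩ : ∃ c s : ℝ, c * c = α ∧ s * s = 1 - α :=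
    ⟨√α, √(1 - α), Real.mul_self_sqrt hα.1, Real.mul_self_sqrt hα'.1⟩
  have hcs : c * c + s * s = 1 := by linarith
  have hcsC : (c:ℂ) * c + s * s = 1 := by exact_mod_cast hcs
  obtain ⟨X, hX⟩ : ∃ X : H →L[ℂ] WithLp 2 (H × H), X = (c:ℂ) • V + (s:ℂ) • W := ⟨_, rfl⟩
  obtain ⟨Y, hY⟩ : ∃ Y : H →L[ℂ] WithLp 2 (H × H), Y = (-s:ℂ) • V + (c:ℂ) • W := ⟨_, rfl⟩
  have hXa : ContinuousLinearMap.adjoint X =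
      (c:ℂ) • ContinuousLinearMap.adjoint V + (s:ℂ) • ContinuousLinearMap.adjoint W := by
    simp [hX, map_smulₛₗ]
  have hYa : ContinuousLinearMap.adjoint Y =
      (-s:ℂ) • ContinuousLinearMap.adjoint V + (c:ℂ) • ContinuousLinearMap.adjoint W := by
    simp [hY, map_smulₛₗ]
  have hXv : ∀ x, X x = (c:ℂ) • V x + (s:ℂ) • W x := fun x => by rw [hX]; rfl
  have hYv : ∀ x, Y x = (-s:ℂ) • V x + (c:ℂ) • W x := fun x => by rw [hY]; rfl
  have hXav : ∀ y, ContinuousLinearMap.adjoint X y = (c:ℂ) • ContinuousLinearMap.adjoint V y +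
      (s:ℂ) • ContinuousLinearMap.adjoint W y := fun y => by rw [hXa]; rfl
  have hYav : ∀ y, ContinuousLinearMap.adjoint Y y = (-s:ℂ) • ContinuousLinearMap.adjoint V y +
      (c:ℂ) • ContinuousLinearMap.adjoint W y := fun y => by rw [hYa]; rfl
  obtain ⟨φ, hφ⟩ : ∃ φ : ((H →L[ℂ] H) × (H →L[ℂ] H)) →⋆ₐ[ℂ]
      (WithLp 2 (H × H) →L[ℂ] WithLp 2 (H × H)), ∀ S T : H →L[ℂ] H, ∀ y, φ (S, T) y =
      V (S (ContinuousLinearMap.adjoint V y)) + W (T (ContinuousLinearMap.adjoint W y)) :=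
    ⟨blockHom V W h11 h12 h21 h22 hs, fun S T y => rfl⟩
  obtain ⟨ψ, hψ⟩ : ∃ ψ : ((H →L[ℂ] H) × (H →L[ℂ] H)) →⋆ₐ[ℂ]
      (WithLp 2 (H × H) →L[ℂ] WithLp 2 (H × H)), ∀ S T : H →L[ℂ] H, ∀ y, ψ (S, T) y =
      X (S (ContinuousLinearMap.adjoint X y)) + Y (T (ContinuousLinearMap.adjoint Y y)) := by
    refine ⟨blockHom X Y ?_ ?_ ?_ ?_ ?_, fun S T y => rfl⟩
    · intro x
      simp only [hXav, hXv, map_add, map_smul, h11, h12, h21, h22]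
      match_scalars; linear_combination hcsC
    · intro x
      simp only [hXav, hYv, map_add, map_smul, h11, h12, h21, h22]
      match_scalars; ring
    · intro x
      simp only [hYav, hXv, map_add, map_smul, h11, h12, h21, h22]
      match_scalars; ring
    · intro x
      simp only [hYav, hYv, map_add, map_smul, h11, h12, h21, h22]
      match_scalars; linear_combination hcsC
    · intro y
      conv_rhs => rw [← hs y]
      simp only [hYav, hYv, hXav, hXv, map_add, map_smul]
      match_scalars <;> first | linear_combination hcsC | ring
  have hXY : ∀ T : H →L[ℂ] H, ψ (T, T) = φ (T, T) := by
    intro T; ext1 y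
    simp only [hφ, hψ, hYav, hYv, hXav, hXv, map_add, map_smul]
    match_scalars <;> first | linear_combination hcsC | ring
  have hcomp : ∀ S T : H →L[ℂ] H, ∀ x,
      ContinuousLinearMap.adjoint V (ψ (S, T) (V x)) = (α • S + (1 - α) • T) x := by
    intro S T x
    have e : (α • S + (1 - α) • T) x = ((α:ℝ):ℂ) • S x + ((1 - α : ℝ):ℂ) • T x := by
      simp only [Complex.coe_smul]; rfl
    rw [e, ← hss, ← hcc]
    simp only [hψ, hYav, hYv, hXav, hXv, map_add, map_smul, h11, h12, h21, smul_zero, map_zero,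
      add_zero]
    push_cast
    module
  have hP1 : ∀ y, φ (1, 0) y = V (ContinuousLinearMap.adjoint V y) := by intro y; simp [hφ]
  have hP2 : ∀ y, φ (0, 1) y = W (ContinuousLinearMap.adjoint W y) := by intro y; simp [hφ]
  obtain ⟨X0, Xs, Xf⟩ := map_cfc_block ψ f hcont hA hB hsA hsB
  obtain ⟨C0, Cs, Cf⟩ := map_cfc_block φ f hcont hC0 hC0 hsC hsC
  have key := h (WithLp 2 (H × H)) (ψ (A, B)) (φ (C, C)) (φ (1, 0)) (φ (0, 1)) X0 C0 Xs Cs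
    (IsSelfAdjoint.map (Prod.ext (by simp) (by simp)) φ)
    (by rw [IsIdempotentElem, ← map_mul]; simp)
    (IsSelfAdjoint.map (Prod.ext (by simp) (by simp)) φ)
    (by rw [IsIdempotentElem, ← map_mul]; simp)
    (by rw [← map_add, ← map_one φ]; congr 1; simp)
  have hS : φ (1, 0) * ψ (A, B) * φ (1, 0) + φ (0, 1) * φ (C, C) * φ (0, 1) = φ (C, C) := by
    ext1 y
    simp only [add_apply, mul_apply_eq_comp, hP1, hP2, hcomp,
      hφ, h21, h22, map_add, map_zero, zero_add, h12, h11, ← hC]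
  have hd : ψ (A, B) - φ (C, C) = ψ ((1 - α) • (A - B), (-α) • (A - B)) := by
    rw [← hXY, ← map_sub]
    congr 1
    ext1
    · change A - C = _
      rw [hC]; module
    · change B - C = _
      rw [hC]; module
  have habs : opAbs (ψ (A, B) - φ (C, C)) =
      ψ ((1 - α) • opAbs (A - B), α • opAbs (A - B)) := by
    rw [hd, opAbs_block, opAbs_smul, opAbs_smul, abs_neg, abs_of_nonneg hα.1,
      abs_of_nonneg hα'.1]
  have hn : 0 ≤ opAbs (A - B) := CFC.abs_nonneg _
  obtain ⟨-, -, Df⟩ := map_cfc_block ψ f hcont (smul_nonneg hα'.1 hn) (smul_nonneg hα.1 hn)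
    (spectrum_smul_abs hA hB hA1 hB1 hα') (spectrum_smul_abs hA hB hA1 hB1 hα)
  rw [hS, habs, Xf, Cf, Df] at key
  rw [ContinuousLinearMap.le_def] at key ⊢
  have key2 := key.adjoint_conj V
  convert key2 using 1
  ext1 x
  simp only [sub_apply, add_apply,
    mul_apply_eq_comp, ContinuousLinearMap.comp_apply, hP1, hP2, hcomp,
    hφ, h21, h22, map_add, map_sub, map_zero, zero_add, h12, h11]
  simp
  module
end
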